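/- For an equivalence n-simplex {C_k}, the augmented chain complex 0 → ℂ[C_n] →^{D_n} ℂ[C_{n−1}] → ⋯ → ℂ[C_1] →^{D_1} ℂ[C_0] →^{D_0} ℂ → 0 is exact: D_0 is surjective, ker D_k = im D_{k+1} for every 0 ≤ k ≤ n−1, and D_n is injective. Equivalently, all homology groups of this complex vanish. -/

import Mathlib

open Finset
open scoped Classical

/-- Strictly increasing `m`-tuples with values in `[n] = {0, 1, …, n}`.
The set `A_k` of the equivalence `n`-simplex corresponds to `Chain n (k+1)`. -/
def Chain (n m : ℕ) : Type :=
  {c : Fin m → Fin (n + 1) // StrictMono c}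

/-- The `ℓ`-th face map: delete the `ℓ`-th coordinate of a tuple. -/
def face {n m : ℕ} (ℓ : Fin (m + 1)) (c : Chain n (m + 1)) : Chain n m :=
  ⟨c.1 ∘ ℓ.succAbove, c.2.comp (Fin.strictMono_succAbove ℓ)⟩

/-- The predicate `B`: some two adjacent coordinates are related by `r`. -/
def hasAdj {n : ℕ} (r : Fin (n + 1) → Fin (n + 1) → Prop) {m : ℕ} (c : Chain n m) : Prop :=
  ∃ i j : Fin m, (i : ℕ) + 1 = (j : ℕ) ∧ r (c.1 i) (c.1 j)

/-- The componentwise relation `≈` on tuples. -/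
def cApprox {n : ℕ} (r : Fin (n + 1) → Fin (n + 1) → Prop) {m : ℕ}
    (c c' : Chain n m) : Prop :=
  ∀ i, r (c.1 i) (c'.1 i)

/-- `C_k`: the quotient of `A_k ∖ B_k` by the componentwise relation `≈`. -/
def CSet (n : ℕ) (r : Fin (n + 1) → Fin (n + 1) → Prop) (k : ℕ) : Type :=
  Quot (fun c c' : {c : Chain n (k + 1) // ¬ hasAdj r c} => cApprox r c.1 c'.1)

/-- The class `[c] ∈ C_k` of a tuple `c ∈ A_k ∖ B_k`. -/
def cls {n : ℕ} (r : Fin (n + 1) → Fin (n + 1) → Prop) {k : ℕ} (c : Chain n (k + 1))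
    (hc : ¬ hasAdj r c) : CSet n r k :=
  Quot.mk _ (⟨c, hc⟩ : {c : Chain n (k + 1) // ¬ hasAdj r c})

/-- `D` is the family of differentials, `D k` being the statement's
`D_{k+1} : ℂ[C_{k+1}] → ℂ[C_k]`, given on basis elements `[c]` by
`D_{k+1}([c]) = ∑_{ℓ ∈ F(c)} (−1)^ℓ [d_ℓ(c)]`. -/
def IsD (n : ℕ) (r : Fin (n + 1) → Fin (n + 1) → Prop)
    (D : ∀ k : ℕ, ((CSet n r (k + 1)) →₀ ℂ) →ₗ[ℂ] ((CSet n r k) →₀ ℂ)) : Prop :=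
  ∀ (k : ℕ) (c : Chain n (k + 2)) (hc : ¬ hasAdj r c),
    D k (Finsupp.single (cls r c hc) 1) =
      ∑ ℓ : Fin (k + 2),
        if h : ¬ hasAdj r (face ℓ c) then
          ((-1 : ℂ) ^ (ℓ : ℕ)) • Finsupp.single (cls r (face ℓ c) h) 1
        else 0

/-- `D0` is the augmentation `D_0 : ℂ[C_0] → ℂ`, sending each basis element to `1`. -/
def IsD0 (n : ℕ) (r : Fin (n + 1) → Fin (n + 1) → Prop)
    (D0 : ((CSet n r 0) →₀ ℂ) →ₗ[ℂ] ℂ) : Prop :=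
  ∀ q : CSet n r 0, D0 (Finsupp.single q 1) = 1

section AcyclicityOfEquivalenceSimplex

variable {n : ℕ} {r : Fin (n + 1) → Fin (n + 1) → Prop}

/-- The normalized generator of a tuple: its class in `ℂ[C_k]`, or `0` for a tuple in `B_k`. -/
noncomputable def normGen (r : Fin (n + 1) → Fin (n + 1) → Prop) {k : ℕ} (c : Chain n (k + 1)) :
    CSet n r k →₀ ℂ :=
  if h : ¬ hasAdj r c then Finsupp.single (cls r c h) 1 else 0

lemma normGen_of_not_hasAdj {k : ℕ} {c : Chain n (k + 1)} (h : ¬ hasAdj r c) :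
    normGen r c = Finsupp.single (cls r c h) 1 := dif_pos h

lemma normGen_of_hasAdj {k : ℕ} {c : Chain n (k + 1)} (h : hasAdj r c) :
    normGen r c = 0 := dif_neg (not_not.2 h)

lemma cApprox.hasAdj (hr : Equivalence r) {m : ℕ} {c c' : Chain n m} (h : cApprox r c c') :
    hasAdj r c → hasAdj r c' := by
  rintro ⟨i, j, hij, hc⟩
  exact ⟨i, j, hij, hr.trans (hr.symm (h i)) (hr.trans hc (h j))⟩

lemma cApprox.symm (hr : Equivalence r) {m : ℕ} {c c' : Chain n m} (h : cApprox r c c') :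
    cApprox r c' c := fun i => hr.symm (h i)

lemma normGen_congr (hr : Equivalence r) {k : ℕ} {c c' : Chain n (k + 1)}
    (h : cApprox r c c') : normGen r c = normGen r c' := by
  by_cases hc : hasAdj r c
  · rw [normGen_of_hasAdj hc, normGen_of_hasAdj (h.hasAdj hr hc)]
  · have hc' : ¬ hasAdj r c' := fun h' => hc ((h.symm hr).hasAdj hr h')
    rw [normGen_of_not_hasAdj hc, normGen_of_not_hasAdj hc']
    congr 1
    exact Quot.sound h

/-- Linear maps out of `ℂ[C_k]` agree once they agree on the normalized generators. -/
lemma linearMap_ext_normGen {k : ℕ} {M : Type*} [AddCommMonoid M] [Module ℂ M]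
    {f g : (CSet n r k →₀ ℂ) →ₗ[ℂ] M} (h : ∀ c, f (normGen r c) = g (normGen r c)) :
    f = g := by
  refine Finsupp.lhom_ext' fun q => LinearMap.ext_ring ?_
  induction q using Quot.ind with
  | mk c => simpa [normGen_of_not_hasAdj c.2] using! h c.1

lemma face_cApprox_face (hr : Equivalence r) {m : ℕ} {c : Chain n (m + 1)} {i j : Fin (m + 1)}
    (hij : (i : ℕ) + 1 = j) (h : r (c.1 i) (c.1 j)) : cApprox r (face i c) (face j c) := by
  intro p
  change r (c.1 (i.succAbove p)) (c.1 (j.succAbove p))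
  by_cases hp : (p : ℕ) = i
  · have h1 : i.succAbove p = j := by ext; simp [Fin.succAbove, Fin.lt_def]; grind
    have h2 : j.succAbove p = i := by ext; simp [Fin.succAbove, Fin.lt_def]; grind
    rw [h1, h2]
    exact hr.symm h
  · have h1 : i.succAbove p = j.succAbove p := by
      ext; simp [Fin.succAbove, Fin.lt_def]; grind
    rw [h1]
    exact hr.refl _

lemma hasAdj_face {m : ℕ} {c : Chain n (m + 1)} {i j l : Fin (m + 1)}
    (hij : (i : ℕ) + 1 = j) (h : r (c.1 i) (c.1 j)) (hli : l ≠ i) (hlj : l ≠ j) :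
    hasAdj r (face l c) := by
  obtain ⟨p, rfl⟩ := Fin.exists_succAbove_eq hli.symm
  obtain ⟨q, rfl⟩ := Fin.exists_succAbove_eq hlj.symm
  refine ⟨p, q, ?_, h⟩
  simp only [Fin.succAbove, Fin.lt_def, ne_eq, Fin.ext_iff] at *
  grind

lemma IsD.apply_normGen (hr : Equivalence r)
    {D : ∀ k : ℕ, (CSet n r (k + 1) →₀ ℂ) →ₗ[ℂ] (CSet n r k →₀ ℂ)} (hD : IsD n r D)
    {k : ℕ} (c : Chain n (k + 2)) :
    D k (normGen r c) = ∑ l : Fin (k + 2), (-1 : ℂ) ^ (l : ℕ) • normGen r (face l c) := by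
  by_cases hc : hasAdj r c
  · rw [normGen_of_hasAdj hc, map_zero]
    obtain ⟨i, j, hij, h⟩ := hc
    have hne : i ≠ j := by rintro rfl; omega
    rw [Fintype.sum_eq_add i j hne]
    · rw [normGen_congr hr (face_cApprox_face hr hij h), ← hij, pow_succ, ← add_smul]
      simp
    · rintro l ⟨hli, hlj⟩
      rw [normGen_of_hasAdj (hasAdj_face hij h hli hlj), smul_zero]
  · rw [normGen_of_not_hasAdj hc, hD]
    refine Finset.sum_congr rfl fun l _ => ?_
    by_cases hl : hasAdj r (face l c)
    · rw [normGen_of_hasAdj hl, dif_neg (not_not.2 hl), smul_zero]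
    · rw [normGen_of_not_hasAdj hl, dif_pos hl]

lemma sum_sum_face_face {m : ℕ} {M : Type*} [AddCommGroup M] [Module ℂ M]
    (g : Chain n m → M) (c : Chain n (m + 2)) :
    ∑ i : Fin (m + 2), ∑ j : Fin (m + 1),
      (-1 : ℂ) ^ (i : ℕ) • (-1 : ℂ) ^ (j : ℕ) • g (face j (face i c)) = 0 := by
  rw [← Finset.sum_product' (f := fun (i : Fin (m + 2)) (j : Fin (m + 1)) =>
    (-1 : ℂ) ^ (i : ℕ) • (-1 : ℂ) ^ (j : ℕ) • g (face j (face i c)))]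
  refine Finset.sum_involution (fun p _ => (p.1.succAbove p.2, p.2.predAbove p.1)) ?_ ?_ ?_ ?_
  · rintro ⟨i, j⟩ -
    have hface : face (j.predAbove i) (face (i.succAbove j) c) = face j (face i c) := by
      refine Subtype.ext (funext fun p => congrArg c.1 ?_)
      exact Fin.succAbove_succAbove_succAbove_predAbove i j p
    have hsign : (-1 : ℂ) ^ (i.succAbove j : ℕ) * (-1) ^ (j.predAbove i : ℕ) =
        - ((-1) ^ (i : ℕ) * (-1) ^ (j : ℕ)) := by
      rw [← pow_add, ← pow_add, Fin.neg_one_pow_succAbove_add_predAbove]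
    simp only [hface, smul_smul, hsign, neg_smul, add_neg_cancel]
  · rintro ⟨i, j⟩ - - h
    exact Fin.succAbove_ne i j (congrArg Prod.fst h)
  · intro _ _
    exact Finset.mem_univ _
  · rintro ⟨i, j⟩ -
    exact Prod.ext (Fin.succAbove_succAbove_predAbove i j) (Fin.predAbove_predAbove_succAbove i j)

lemma IsD.comp_eq_zero (hr : Equivalence r)
    {D : ∀ k : ℕ, (CSet n r (k + 1) →₀ ℂ) →ₗ[ℂ] (CSet n r k →₀ ℂ)} (hD : IsD n r D) (k : ℕ) :
    D k ∘ₗ D (k + 1) = 0 := by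
  refine linearMap_ext_normGen fun c => ?_
  simp only [LinearMap.comp_apply, hD.apply_normGen hr, map_sum, map_smul, Finset.smul_sum,
    LinearMap.zero_apply]
  exact sum_sum_face_face (normGen r) c

lemma not_hasAdj_of_length_one (c : Chain n 1) : ¬ hasAdj r c := by
  rintro ⟨i, j, hij, -⟩
  omega

lemma IsD0.apply_normGen {D0 : (CSet n r 0 →₀ ℂ) →ₗ[ℂ] ℂ} (hD0 : IsD0 n r D0) (c : Chain n 1) :
    D0 (normGen r c) = 1 := by
  rw [normGen_of_not_hasAdj (not_hasAdj_of_length_one c)]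
  exact hD0 _

lemma IsD0.comp_eq_zero (hr : Equivalence r)
    {D : ∀ k : ℕ, (CSet n r (k + 1) →₀ ℂ) →ₗ[ℂ] (CSet n r k →₀ ℂ)} (hD : IsD n r D)
    {D0 : (CSet n r 0 →₀ ℂ) →ₗ[ℂ] ℂ} (hD0 : IsD0 n r D0) :
    D0 ∘ₗ D 0 = 0 := by
  refine linearMap_ext_normGen fun c => ?_
  simp [hD.apply_normGen hr, hD0.apply_normGen, Fin.sum_univ_two]

/-- Prepend `0` to a tuple of positive entries. -/
def consZero {m : ℕ} (c : Chain n (m + 1)) (h : 0 < c.1 0) : Chain n (m + 2) :=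
  ⟨Fin.cons 0 c.1, Fin.strictMono_iff_lt_succ.2 fun i => by
    induction i using Fin.cases with
    | zero => exact h
    | succ i => exact c.2 (Fin.castSucc_lt_succ (i := i))⟩

lemma face_zero_consZero {m : ℕ} (c : Chain n (m + 1)) (h : 0 < c.1 0) :
    face 0 (consZero c h) = c :=
  Subtype.ext (funext fun _ => rfl)

lemma face_pos {m : ℕ} {c : Chain n (m + 2)} (h : 0 < c.1 0) (l : Fin (m + 2)) :
    0 < (face l c).1 0 :=
  h.trans_le (c.2.monotone (Fin.zero_le _))

lemma face_zero_pos {m : ℕ} (c : Chain n (m + 2)) : 0 < (face 0 c).1 0 :=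
  (Fin.zero_le _).trans_lt (c.2 (Fin.succ_pos 0))

lemma face_succ_consZero {m : ℕ} (c : Chain n (m + 2)) (h : 0 < c.1 0) (l : Fin (m + 2)) :
    face l.succ (consZero c h) = consZero (face l c) (face_pos h l) := by
  refine Subtype.ext (funext fun p => ?_)
  induction p using Fin.cases with
  | zero => simp [face, consZero]
  | succ p => simp [face, consZero, Fin.removeNth_apply]

lemma consZero_face_zero {m : ℕ} (c : Chain n (m + 2)) (h : c.1 0 = 0) :
    consZero (face 0 c) (face_zero_pos c) = c := by
  refine Subtype.ext (funext fun p => ?_)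
  induction p using Fin.cases with
  | zero => exact h.symm
  | succ p => rfl

lemma hasAdj_consZero {m : ℕ} {c : Chain n (m + 1)} (h : 0 < c.1 0) (hc : hasAdj r c) :
    hasAdj r (consZero c h) := by
  obtain ⟨i, j, hij, hc⟩ := hc
  exact ⟨i.succ, j.succ, by simpa using hij, hc⟩

/-- The value of the contracting homotopy on the generator of a tuple. -/
noncomputable def coneGen (r : Fin (n + 1) → Fin (n + 1) → Prop) {k : ℕ} (c : Chain n (k + 1)) :
    CSet n r (k + 1) →₀ ℂ :=
  if h : 0 < c.1 0 then normGen r (consZero c h) else 0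

lemma coneGen_of_pos {k : ℕ} {c : Chain n (k + 1)} (h : 0 < c.1 0) :
    coneGen r c = normGen r (consZero c h) := dif_pos h

lemma coneGen_of_eq_zero {k : ℕ} {c : Chain n (k + 1)} (h : c.1 0 = 0) :
    coneGen r c = 0 := dif_neg (by simp [h])

lemma coneGen_of_rel {k : ℕ} {c : Chain n (k + 1)} (h : r 0 (c.1 0)) : coneGen r c = 0 := by
  unfold coneGen
  split_ifs with hc
  · exact normGen_of_hasAdj ⟨0, 1, rfl, h⟩
  · rfl

lemma coneGen_of_hasAdj {k : ℕ} {c : Chain n (k + 1)} (h : hasAdj r c) : coneGen r c = 0 := by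
  unfold coneGen
  split_ifs with hc
  · exact normGen_of_hasAdj (hasAdj_consZero hc h)
  · rfl

lemma coneGen_congr (hr : Equivalence r) {k : ℕ} {c c' : Chain n (k + 1)}
    (h : cApprox r c c') : coneGen r c = coneGen r c' := by
  by_cases h0 : r 0 (c.1 0)
  · rw [coneGen_of_rel h0, coneGen_of_rel (hr.trans h0 (h 0))]
  · have hc : 0 < c.1 0 := Fin.pos_iff_ne_zero.2 fun e => h0 (e ▸ hr.refl _)
    have hc' : 0 < c'.1 0 := Fin.pos_iff_ne_zero.2 fun e => h0 (e ▸ hr.symm (h 0))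
    rw [coneGen_of_pos hc, coneGen_of_pos hc']
    refine normGen_congr hr fun p => ?_
    induction p using Fin.cases with
    | zero => exact hr.refl _
    | succ p => exact h p

/-- The contracting homotopy on basis elements. -/
noncomputable def coneClass (hr : Equivalence r) {k : ℕ} :
    CSet n r k → (CSet n r (k + 1) →₀ ℂ) :=
  Quot.lift (fun c => coneGen r c.1) fun _ _ h => coneGen_congr hr h

/-- The contracting homotopy, which prepends `0` to a tuple. -/
noncomputable def cone (hr : Equivalence r) (k : ℕ) :
    (CSet n r k →₀ ℂ) →ₗ[ℂ] (CSet n r (k + 1) →₀ ℂ) :=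
  Finsupp.linearCombination ℂ (coneClass hr)

lemma cone_normGen (hr : Equivalence r) {k : ℕ} (c : Chain n (k + 1)) :
    cone hr k (normGen r c) = coneGen r c := by
  by_cases hc : hasAdj r c
  · rw [normGen_of_hasAdj hc, coneGen_of_hasAdj hc, map_zero]
  · rw [normGen_of_not_hasAdj hc, cone, Finsupp.linearCombination_single, one_smul]
    rfl

lemma IsD.comp_cone_add_cone_comp (hr : Equivalence r)
    {D : ∀ k : ℕ, (CSet n r (k + 1) →₀ ℂ) →ₗ[ℂ] (CSet n r k →₀ ℂ)} (hD : IsD n r D) (k : ℕ) :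
    D (k + 1) ∘ₗ cone hr (k + 1) + cone hr k ∘ₗ D k = LinearMap.id := by
  refine linearMap_ext_normGen fun c => ?_
  simp only [LinearMap.add_apply, LinearMap.comp_apply, LinearMap.id_apply, cone_normGen,
    hD.apply_normGen hr c, map_sum, map_smul]
  rcases (Fin.zero_le (c.1 0)).eq_or_lt' with h | h
  · rw [coneGen_of_eq_zero h, map_zero, zero_add, Fin.sum_univ_succ, Finset.sum_eq_zero,
      coneGen_of_pos (face_zero_pos c), consZero_face_zero c h]
    · simp
    · intro l _
      rw [coneGen_of_eq_zero (by simpa [face] using h), smul_zero]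
  · rw [coneGen_of_pos h, hD.apply_normGen hr, Fin.sum_univ_succ, face_zero_consZero]
    simp [face_succ_consZero, coneGen_of_pos (face_pos h _), pow_succ]

/-- The one-element tuple `(0)`. -/
def zeroVertex (n : ℕ) : Chain n 1 := ⟨fun _ => 0, Subsingleton.strictMono _⟩

lemma IsD.comp_cone_add_augmentation (hr : Equivalence r)
    {D : ∀ k : ℕ, (CSet n r (k + 1) →₀ ℂ) →ₗ[ℂ] (CSet n r k →₀ ℂ)} (hD : IsD n r D)
    {D0 : (CSet n r 0 →₀ ℂ) →ₗ[ℂ] ℂ} (hD0 : IsD0 n r D0) :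
    D 0 ∘ₗ cone hr 0 + D0.smulRight (normGen r (zeroVertex n)) = LinearMap.id := by
  refine linearMap_ext_normGen fun c => ?_
  simp only [LinearMap.add_apply, LinearMap.comp_apply, LinearMap.id_apply, cone_normGen,
    LinearMap.smulRight_apply, hD0.apply_normGen, one_smul]
  rcases (Fin.zero_le (c.1 0)).eq_or_lt' with h | h
  · rw [coneGen_of_eq_zero h, map_zero, zero_add]
    congr 1
    refine Subtype.ext (funext fun p => ?_)
    rw [Fin.fin_one_eq_zero p, h]
    rfl
  · have h1 : face 1 (consZero c h) = zeroVertex n :=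
      Subtype.ext (funext fun p => by rw [Fin.fin_one_eq_zero p]; rfl)
    rw [coneGen_of_pos h, hD.apply_normGen hr, Fin.sum_univ_two, face_zero_consZero, h1]
    simp

lemma IsD.ker_eq_range (hr : Equivalence r)
    {D : ∀ k : ℕ, (CSet n r (k + 1) →₀ ℂ) →ₗ[ℂ] (CSet n r k →₀ ℂ)} (hD : IsD n r D) (k : ℕ) :
    LinearMap.ker (D k) = LinearMap.range (D (k + 1)) := by
  refine le_antisymm (fun x hx => ⟨cone hr (k + 1) x, ?_⟩)
    (LinearMap.range_le_ker_iff.2 (hD.comp_eq_zero hr k))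
  simpa [LinearMap.mem_ker.1 hx] using LinearMap.congr_fun (hD.comp_cone_add_cone_comp hr k) x

lemma IsD0.ker_eq_range (hr : Equivalence r)
    {D : ∀ k : ℕ, (CSet n r (k + 1) →₀ ℂ) →ₗ[ℂ] (CSet n r k →₀ ℂ)} (hD : IsD n r D)
    {D0 : (CSet n r 0 →₀ ℂ) →ₗ[ℂ] ℂ} (hD0 : IsD0 n r D0) :
    LinearMap.ker D0 = LinearMap.range (D 0) := by
  refine le_antisymm (fun x hx => ⟨cone hr 0 x, ?_⟩)
    (LinearMap.range_le_ker_iff.2 (hD0.comp_eq_zero hr hD))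
  simpa [LinearMap.mem_ker.1 hx] using
    LinearMap.congr_fun (hD.comp_cone_add_augmentation hr hD0) x

lemma isEmpty_CSet {k : ℕ} (h : n < k) : IsEmpty (CSet n r k) := by
  refine ⟨Quot.ind fun c => ?_⟩
  have := Fintype.card_le_of_injective _ c.1.2.injective
  simp at this
  omega

lemma range_eq_bot_of_lt {k : ℕ} (h : n < k) {M : Type*} [AddCommMonoid M] [Module ℂ M]
    (f : (CSet n r k →₀ ℂ) →ₗ[ℂ] M) : LinearMap.range f = ⊥ := by
  have := isEmpty_CSet (r := r) h
  rw [LinearMap.range_eq_bot]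
  exact Subsingleton.elim _ _

end AcyclicityOfEquivalenceSimplex

/-- Exactness of the augmented chain complex of an equivalence `n`-simplex:
`D_0` is surjective, `ker D_k = im D_{k+1}` for `0 ≤ k ≤ n - 1` (the case `k = 0` stated
separately, and `k = j + 1` for `1 ≤ k ≤ n - 1`), and `D_n` is injective. -/
theorem stmt8 (n : ℕ) (r : Fin (n + 1) → Fin (n + 1) → Prop) (hr : Equivalence r)
    (hadj : ∀ i j : Fin (n + 1), r i j → (i : ℕ) ≠ (j : ℕ) + 1 ∧ (j : ℕ) ≠ (i : ℕ) + 1)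
    (D : ∀ k : ℕ, ((CSet n r (k + 1)) →₀ ℂ) →ₗ[ℂ] ((CSet n r k) →₀ ℂ))
    (hD : IsD n r D)
    (D0 : ((CSet n r 0) →₀ ℂ) →ₗ[ℂ] ℂ) (hD0 : IsD0 n r D0) :
    Function.Surjective ⇑D0 ∧
    (1 ≤ n → LinearMap.ker D0 = LinearMap.range (D 0)) ∧
    (∀ j : ℕ, j + 2 ≤ n → LinearMap.ker (D j) = LinearMap.range (D (j + 1))) ∧
    (1 ≤ n → Function.Injective ⇑(D (n - 1))) ∧
    (n = 0 → Function.Injective ⇑D0) := by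
  refine ⟨fun z => ⟨z • normGen r (zeroVertex n), ?_⟩, fun _ => hD0.ker_eq_range hr hD,
    fun j _ => hD.ker_eq_range hr j, fun _ => ?_, fun _ => ?_⟩
  · simp [hD0.apply_normGen]
  · rw [← LinearMap.ker_eq_bot, hD.ker_eq_range hr, range_eq_bot_of_lt (by omega)]
  · rw [← LinearMap.ker_eq_bot, hD0.ker_eq_range hr hD, range_eq_bot_of_lt (by omega)]
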